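/- For every f ∈ V(ℤ) with Δ(f) ≠ 0 one has m(f) = ∏_p m_p(f), where the product runs over all primes p, all quantities m(f) and m_p(f) are finite, and m_p(f) = 1 for all but finitely many primes p. -/

import Mathlib

noncomputable section

namespace BQPaper

/-- A binary quartic form `a x⁴ + b x³y + c x²y² + d xy³ + e y⁴` over `R`,
recorded by its coefficients. -/
structure BQ (R : Type*) where
  a : R
  b : R
  c : R
  d : R
  e : R

/-- A 2×2 matrix `!![p, q; r, s]`, recorded by its entries. -/
structure Mat2 (R : Type*) where
  p : R
  q : R
  r : R
  s : R

variable {R S : Type*} [CommRing R] [CommRing S]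

def Mat2.det (m : Mat2 R) : R := m.p * m.s - m.q * m.r

/-- Matrix product. -/
def Mat2.mul (m n : Mat2 R) : Mat2 R :=
  ⟨m.p * n.p + m.q * n.r, m.p * n.q + m.q * n.s,
   m.r * n.p + m.s * n.r, m.r * n.q + m.s * n.s⟩

/-- Scalar multiple of a matrix. -/
def Mat2.smul (z : R) (m : Mat2 R) : Mat2 R := ⟨z * m.p, z * m.q, z * m.r, z * m.s⟩

def Mat2.map (φ : R →+* S) (m : Mat2 R) : Mat2 S := ⟨φ m.p, φ m.q, φ m.r, φ m.s⟩

/-- Evaluation of a binary quartic form at `(x, y)`. -/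
def BQ.eval (f : BQ R) (x y : R) : R :=
  f.a * x ^ 4 + f.b * x ^ 3 * y + f.c * x ^ 2 * y ^ 2 + f.d * x * y ^ 3 + f.e * y ^ 4

/-- The invariant `I(f) = 12ae − 3bd + c²`. -/
def BQ.invI (f : BQ R) : R := 12 * f.a * f.e - 3 * f.b * f.d + f.c ^ 2

/-- The invariant `J(f) = 72ace + 9bcd − 27ad² − 27eb² − 2c³`. -/
def BQ.invJ (f : BQ R) : R :=
  72 * f.a * f.c * f.e + 9 * f.b * f.c * f.d - 27 * f.a * f.d ^ 2
    - 27 * f.e * f.b ^ 2 - 2 * f.c ^ 3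

/-- The discriminant of a binary quartic form; one has `Δ = (4I³ − J²)/27`. -/
def BQ.disc (f : BQ R) : R :=
  256 * f.a ^ 3 * f.e ^ 3 - 192 * f.a ^ 2 * f.b * f.d * f.e ^ 2
    - 128 * f.a ^ 2 * f.c ^ 2 * f.e ^ 2 + 144 * f.a ^ 2 * f.c * f.d ^ 2 * f.e
    - 27 * f.a ^ 2 * f.d ^ 4 + 144 * f.a * f.b ^ 2 * f.c * f.e ^ 2
    - 6 * f.a * f.b ^ 2 * f.d ^ 2 * f.e - 80 * f.a * f.b * f.c ^ 2 * f.d * f.e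
    + 18 * f.a * f.b * f.c * f.d ^ 3 + 16 * f.a * f.c ^ 4 * f.e
    - 4 * f.a * f.c ^ 3 * f.d ^ 2 - 27 * f.b ^ 4 * f.e ^ 2
    + 18 * f.b ^ 3 * f.c * f.d * f.e - 4 * f.b ^ 3 * f.d ^ 3
    - 4 * f.b ^ 2 * f.c ^ 3 * f.e + f.b ^ 2 * f.c ^ 2 * f.d ^ 2

/-- Multiplication of all coefficients of a form by a scalar. -/
def BQ.rsmul (t : R) (f : BQ R) : BQ R := ⟨t * f.a, t * f.b, t * f.c, t * f.d, t * f.e⟩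

/-- Substitution action of a 2×2 matrix on binary quartic forms:
`(m • f)(x,y) = f((x,y)·m) = f(px + ry, qx + sy)` for `m = !![p, q; r, s]`. -/
def BQ.subst (m : Mat2 R) (f : BQ R) : BQ R where
  a := f.a * m.p ^ 4 + f.b * m.p ^ 3 * m.q + f.c * m.p ^ 2 * m.q ^ 2
      + f.d * m.p * m.q ^ 3 + f.e * m.q ^ 4
  b := 4 * f.a * m.p ^ 3 * m.r + f.b * m.p ^ 3 * m.s + 3 * f.b * m.p ^ 2 * m.q * m.r
      + 2 * f.c * m.p ^ 2 * m.q * m.s + 2 * f.c * m.p * m.q ^ 2 * m.r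
      + 3 * f.d * m.p * m.q ^ 2 * m.s + f.d * m.q ^ 3 * m.r + 4 * f.e * m.q ^ 3 * m.s
  c := 6 * f.a * m.p ^ 2 * m.r ^ 2 + 3 * f.b * m.p ^ 2 * m.r * m.s
      + 3 * f.b * m.p * m.q * m.r ^ 2 + f.c * m.p ^ 2 * m.s ^ 2
      + 4 * f.c * m.p * m.q * m.r * m.s + f.c * m.q ^ 2 * m.r ^ 2
      + 3 * f.d * m.p * m.q * m.s ^ 2 + 3 * f.d * m.q ^ 2 * m.r * m.s
      + 6 * f.e * m.q ^ 2 * m.s ^ 2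
  d := 4 * f.a * m.p * m.r ^ 3 + 3 * f.b * m.p * m.r ^ 2 * m.s + f.b * m.q * m.r ^ 3
      + 2 * f.c * m.p * m.r * m.s ^ 2 + 2 * f.c * m.q * m.r ^ 2 * m.s
      + f.d * m.p * m.s ^ 3 + 3 * f.d * m.q * m.r * m.s ^ 2 + 4 * f.e * m.q * m.s ^ 3
  e := f.a * m.r ^ 4 + f.b * m.r ^ 3 * m.s + f.c * m.r ^ 2 * m.s ^ 2
      + f.d * m.r * m.s ^ 3 + f.e * m.s ^ 4

/-- The twisted action `(γ·f)(x,y) = f((x,y)·γ)/det(γ)²`, which descends to `PGL₂`.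
(`Ring.inverse` is the genuine inverse when `det` is a unit.) -/
def BQ.twist (m : Mat2 R) (f : BQ R) : BQ R :=
  BQ.rsmul (Ring.inverse m.det ^ 2) (f.subst m)

/-- Coefficientwise map of forms along a ring homomorphism. -/
def BQ.map (φ : R →+* S) (f : BQ R) : BQ S := ⟨φ f.a, φ f.b, φ f.c, φ f.d, φ f.e⟩

end BQPaper

namespace BQPaper

instance (p : Nat.Primes) : Fact (p : ℕ).Prime := ⟨p.2⟩

/-- A binary quartic form over `ℚ` is integral if it comes from a form over `ℤ`. -/
def IsIntFormQ (f : BQ ℚ) : Prop := ∃ g : BQ ℤ, g.map (Int.castRingHom ℚ) = f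

/-- A matrix over `ℚ` lies in `GL₂(ℤ)` if it is an integer matrix with unit
determinant. -/
def IsIntUnitMatQ (m : Mat2 ℚ) : Prop :=
  ∃ m' : Mat2 ℤ, IsUnit m'.det ∧ m'.map (Int.castRingHom ℚ) = m

/-- A binary quartic form over `ℚ_p` is integral if all its coefficients lie
in `ℤ_p`. -/
def IsIntFormP (p : ℕ) [Fact p.Prime] (f : BQ ℚ_[p]) : Prop :=
  ‖f.a‖ ≤ 1 ∧ ‖f.b‖ ≤ 1 ∧ ‖f.c‖ ≤ 1 ∧ ‖f.d‖ ≤ 1 ∧ ‖f.e‖ ≤ 1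

/-- A matrix over `ℚ_p` lies in `GL₂(ℤ_p)` if its entries lie in `ℤ_p` and its
determinant is a `p`-adic unit. -/
def IsIntUnitMatP (p : ℕ) [Fact p.Prime] (m : Mat2 ℚ_[p]) : Prop :=
  ‖m.p‖ ≤ 1 ∧ ‖m.q‖ ≤ 1 ∧ ‖m.r‖ ≤ 1 ∧ ‖m.s‖ ≤ 1 ∧ ‖m.det‖ = 1

/-- `PGL₂(ℚ)_f`: elements `γ` of `PGL₂(ℚ)` (presented by matrices in `GL₂(ℚ)`) with
`γ·f ∈ V(ℤ)`. -/
def GlobalSet (f : BQ ℤ) : Type _ :=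
  {m : Mat2 ℚ // IsUnit m.det ∧ IsIntFormQ ((f.map (Int.castRingHom ℚ)).twist m)}

/-- Two matrices present elements of the same left `PGL₂(ℤ)`-coset of `PGL₂(ℚ)` iff
they differ by left multiplication by `GL₂(ℤ)` and by a nonzero scalar. -/
def globalRel (f : BQ ℤ) (m₁ m₂ : GlobalSet f) : Prop :=
  ∃ (u : Mat2 ℚ) (z : ℚ), IsIntUnitMatQ u ∧ z ≠ 0 ∧
    m₂.val = Mat2.smul z (Mat2.mul u m₁.val)

/-- `m(f) = #(PGL₂(ℤ)\PGL₂(ℚ)_f)`. -/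
def mGlobal (f : BQ ℤ) : ℕ := Nat.card (Quot (globalRel f))

/-- `PGL₂(ℚ_p)_f` for an integral form `f`. -/
def LocalSet (p : ℕ) [Fact p.Prime] (f : BQ ℤ) : Type _ :=
  {m : Mat2 ℚ_[p] // IsUnit m.det ∧
    IsIntFormP p ((f.map (Int.castRingHom ℚ_[p])).twist m)}

/-- Left `PGL₂(ℤ_p)`-coset equivalence in `PGL₂(ℚ_p)`. -/
def localRel (p : ℕ) [Fact p.Prime] (f : BQ ℤ) (m₁ m₂ : LocalSet p f) : Prop :=
  ∃ (u : Mat2 ℚ_[p]) (z : ℚ_[p]), IsIntUnitMatP p u ∧ z ≠ 0 ∧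
    m₂.val = Mat2.smul z (Mat2.mul u m₁.val)

/-- `m_p(f) = #(PGL₂(ℤ_p)\PGL₂(ℚ_p)_f)`. -/
def mLocal (p : ℕ) [Fact p.Prime] (f : BQ ℤ) : ℕ := Nat.card (Quot (localRel p f))

/-! Over a valuation ring `A` with fraction field `K`, clearing denominators and the Cartan
decomposition represent every coset in `PGL₂(A)\PGL₂(K)` by `!![d, 0; x, 1] * w` with `d`, `x` in
`A` and `w` a permutation matrix. If the corresponding twist of an integral form `f` is integral,
then `d²` divides `Δ(f)`, and the coset depends only on `w` and on `d`, `x` modulo `Δ(f)`. So for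
`A = ℤ_p` there are finitely many such cosets, and only the trivial one when `Δ(f)` is a unit.

Globally, `ℚ` has class number one and every finite adele is the sum of a rational number and an
integral adele. Hence a family of cosets in `PGL₂(ℤ_p)\PGL₂(ℚ_p)`, almost all of them trivial,
comes from exactly one coset in `PGL₂(ℤ)\PGL₂(ℚ)`. As integrality of a form can be tested one prime
at a time, the global coset space of `f` is the product of the local ones. -/

/-! ### Matrices and quartic forms -/

attribute [ext] Mat2 BQ

section Algebra

variable {R S : Type*} [CommRing R] [CommRing S]

namespace Mat2

instance : One (Mat2 R) := ⟨⟨1, 0, 0, 1⟩⟩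

instance : Mul (Mat2 R) := ⟨Mat2.mul⟩

instance : SMul R (Mat2 R) := ⟨Mat2.smul⟩

theorem one_def : (1 : Mat2 R) = ⟨1, 0, 0, 1⟩ := rfl

theorem mul_def (m n : Mat2 R) :
    m * n = ⟨m.p * n.p + m.q * n.r, m.p * n.q + m.q * n.s,
      m.r * n.p + m.s * n.r, m.r * n.q + m.s * n.s⟩ := rfl

theorem smul_def (z : R) (m : Mat2 R) : z • m = ⟨z * m.p, z * m.q, z * m.r, z * m.s⟩ := rfl

instance : Monoid (Mat2 R) where
  mul_assoc u v w := by ext <;> simp only [mul_def] <;> ring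
  one_mul m := by simp [mul_def, one_def]
  mul_one m := by simp [mul_def, one_def]

instance : MulAction R (Mat2 R) where
  one_smul m := by simp [smul_def]
  mul_smul z w m := by simp only [smul_def, mul_assoc]

instance : IsScalarTower R (Mat2 R) (Mat2 R) where
  smul_assoc z m n := by ext <;> simp only [smul_def, mul_def, smul_eq_mul] <;> ring

instance : SMulCommClass R (Mat2 R) (Mat2 R) where
  smul_comm z m n := by ext <;> simp only [smul_def, mul_def, smul_eq_mul] <;> ring

@[simp]
theorem det_one : (1 : Mat2 R).det = 1 := by simp [det, one_def]

theorem det_mul (m n : Mat2 R) : (m * n).det = m.det * n.det := by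
  simp only [det, mul_def]; ring

theorem det_smul (z : R) (m : Mat2 R) : (z • m).det = z ^ 2 * m.det := by
  simp only [det, smul_def]; ring

theorem det_map (φ : R →+* S) (m : Mat2 R) : (m.map φ).det = φ m.det := by
  simp only [det, map, map_sub, map_mul]

@[simp]
protected theorem map_one (φ : R →+* S) : (1 : Mat2 R).map φ = 1 := by
  simp [map, one_def]

protected theorem map_mul (φ : R →+* S) (m n : Mat2 R) : (m * n).map φ = m.map φ * n.map φ := by
  simp only [map, mul_def, map_add, map_mul]

protected theorem map_smul (φ : R →+* S) (z : R) (m : Mat2 R) :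
    (z • m).map φ = φ z • m.map φ := by
  simp only [map, smul_def, map_mul]

theorem isUnit_iff_isUnit_det {m : Mat2 R} : IsUnit m ↔ IsUnit m.det := by
  constructor
  · rintro ⟨u, rfl⟩
    exact .of_mul_eq_one (u⁻¹).val.det (by rw [← det_mul, u.mul_inv, det_one])
  · rintro ⟨D, hD⟩
    let adj : Mat2 R := ⟨m.s, -m.q, -m.r, m.p⟩
    have mul_adj : m * adj = m.det • 1 := by
      ext <;> simp only [adj, mul_def, smul_def, one_def, det] <;> ring
    have adj_mul : adj * m = m.det • 1 := by
      ext <;> simp only [adj, mul_def, smul_def, one_def, det] <;> ring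
    refine ⟨⟨m, (↑D⁻¹ : R) • adj, ?_, ?_⟩, rfl⟩
    · rw [mul_smul_comm, mul_adj, smul_smul, ← hD, D.inv_mul, one_smul]
    · rw [smul_mul_assoc, adj_mul, smul_smul, ← hD, D.inv_mul, one_smul]

theorem isUnit_map (φ : R →+* S) {m : Mat2 R} (hm : IsUnit m) : IsUnit (m.map φ) := by
  rw [isUnit_iff_isUnit_det, det_map]
  exact (isUnit_iff_isUnit_det.1 hm).map φ

/-- The lower triangular matrix `!![d, 0; x, 1]`. Every coset in `PGL₂(A)\PGL₂(K)` over a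
valuation ring has a representative of this shape. -/
def lower (d x : R) : Mat2 R := ⟨d, 0, x, 1⟩

/-- The permutation matrix `!![0, 1; 1, 0]`. -/
def swap : Mat2 R := ⟨0, 1, 1, 0⟩

theorem det_lower (d x : R) : (lower d x).det = d := by simp [lower, det]

theorem map_lower (φ : R →+* S) (d x : R) : (lower d x).map φ = lower (φ d) (φ x) := by
  simp [lower, map]

theorem lower_mul_lower (u t d x : R) : lower u t * lower d x = lower (u * d) (t * d + x) := by
  simp [lower, mul_def]

@[simp]
theorem map_swap (φ : R →+* S) : (swap : Mat2 R).map φ = swap := by simp [swap, map]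

theorem swap_mul (m : Mat2 R) : swap * m = ⟨m.r, m.s, m.p, m.q⟩ := by simp [swap, mul_def]

theorem mul_swap (m : Mat2 R) : m * swap = ⟨m.q, m.p, m.s, m.r⟩ := by simp [swap, mul_def]

theorem swap_mul_swap : (swap * swap : Mat2 R) = 1 := by simp [swap, mul_def, one_def]

theorem isUnit_swap : IsUnit (swap : Mat2 R) := ⟨⟨_, _, swap_mul_swap, swap_mul_swap⟩, rfl⟩

end Mat2

namespace BQ

instance : SMul R (BQ R) := ⟨BQ.rsmul⟩

theorem smul_def (t : R) (f : BQ R) :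
    t • f = ⟨t * f.a, t * f.b, t * f.c, t * f.d, t * f.e⟩ := rfl

instance : MulAction R (BQ R) where
  one_smul f := by simp [smul_def]
  mul_smul t u f := by simp only [smul_def, mul_assoc]

theorem twist_def (m : Mat2 R) (f : BQ R) : f.twist m = Ring.inverse m.det ^ 2 • f.subst m := rfl

theorem subst_one (f : BQ R) : f.subst 1 = f := by
  ext <;> simp [subst, Mat2.one_def]

theorem subst_mul (u m : Mat2 R) (f : BQ R) : f.subst (u * m) = (f.subst m).subst u := by
  ext <;> simp only [subst, Mat2.mul_def] <;> ring

theorem subst_smul (z : R) (m : Mat2 R) (f : BQ R) : f.subst (z • m) = z ^ 4 • f.subst m := by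
  ext <;> simp only [subst, Mat2.smul_def, smul_def] <;> ring

theorem smul_subst (t : R) (m : Mat2 R) (f : BQ R) : (t • f).subst m = t • f.subst m := by
  ext <;> simp only [subst, smul_def] <;> ring

theorem twist_mul (u m : Mat2 R) (f : BQ R) : f.twist (u * m) = (f.twist m).twist u := by
  simp only [twist_def, subst_mul, smul_subst, smul_smul, Mat2.det_mul, Ring.mul_inverse_rev]
  ring_nf

theorem twist_units_smul (z : Rˣ) (m : Mat2 R) (f : BQ R) : f.twist (z • m) = f.twist m := by
  have hz : Ring.inverse (z : R) * z = 1 := Ring.inverse_mul_cancel _ z.isUnit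
  simp only [twist_def, Units.smul_def, subst_smul, smul_smul, Mat2.det_smul, Ring.mul_inverse_rev,
    ← Ring.inverse_pow]
  congr 1
  linear_combination (Ring.inverse m.det ^ 2) * (congrArg (· ^ 4) hz)

theorem twist_eq_subst {m : Mat2 R} (hm : m.det ^ 2 = 1) (f : BQ R) : f.twist m = f.subst m := by
  rw [twist_def, Ring.inverse_pow, hm, Ring.inverse_one, one_smul]

@[simp]
theorem twist_one (f : BQ R) : f.twist 1 = f := by
  rw [twist_eq_subst (by simp), subst_one]

theorem map_smul (φ : R →+* S) (t : R) (f : BQ R) : (t • f).map φ = φ t • f.map φ := by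
  simp only [map, smul_def, map_mul]

theorem map_subst (φ : R →+* S) (m : Mat2 R) (f : BQ R) :
    (f.subst m).map φ = (f.map φ).subst (m.map φ) := by
  simp only [subst, map, Mat2.map, map_add, map_mul, map_pow, map_ofNat]

theorem map_twist (φ : R →+* S) {m : Mat2 R} (hm : IsUnit m.det) (f : BQ R) :
    (f.twist m).map φ = (f.map φ).twist (m.map φ) := by
  obtain ⟨D, hD⟩ := hm
  have hφD : φ m.det = (Units.map (φ : R →* S) D : Sˣ) := by rw [← hD]; rfl
  rw [twist_def, twist_def, map_smul, map_subst, Mat2.det_map, hφD, ← hD, Ring.inverse_unit,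
    Ring.inverse_unit, map_pow, ← map_inv]
  rfl

theorem disc_map (φ : R →+* S) (f : BQ R) : (f.map φ).disc = φ f.disc := by
  simp only [map, disc, map_add, map_sub, map_mul, map_pow, map_ofNat]

theorem disc_twist_lower (f : BQ R) (x : R) : (f.twist (Mat2.lower 1 x)).disc = f.disc := by
  rw [twist_eq_subst (by simp [Mat2.det_lower])]
  simp only [subst, disc, Mat2.lower]; ring

theorem disc_twist_swap (f : BQ R) : (f.twist Mat2.swap).disc = f.disc := by
  rw [twist_eq_subst (by simp [Mat2.swap, Mat2.det])]
  simp only [subst, disc, Mat2.swap]; ring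

-- Every monomial of `Δ` is divisible by `e` or by `d²`.
theorem sq_dvd_disc {f : BQ R} {t : R} (hd : t ∣ f.d) (he : t ^ 2 ∣ f.e) : t ^ 2 ∣ f.disc := by
  have key : f.disc =
      f.e * (256 * f.a ^ 3 * f.e ^ 2 - 192 * f.a ^ 2 * f.b * f.d * f.e
        - 128 * f.a ^ 2 * f.c ^ 2 * f.e + 144 * f.a ^ 2 * f.c * f.d ^ 2
        + 144 * f.a * f.b ^ 2 * f.c * f.e - 6 * f.a * f.b ^ 2 * f.d ^ 2
        - 80 * f.a * f.b * f.c ^ 2 * f.d + 16 * f.a * f.c ^ 4 - 27 * f.b ^ 4 * f.e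
        + 18 * f.b ^ 3 * f.c * f.d - 4 * f.b ^ 2 * f.c ^ 3)
      + f.d ^ 2 * (18 * f.a * f.b * f.c * f.d - 27 * f.a ^ 2 * f.d ^ 2
        - 4 * f.a * f.c ^ 3 - 4 * f.b ^ 3 * f.d + f.b ^ 2 * f.c ^ 2) := by
    rw [disc]; ring
  rw [key]
  exact dvd_add (he.mul_right _) ((pow_dvd_pow_of_dvd hd 2).mul_right _)

end BQ

end Algebra

/-! ### Cosets of integral twists -/

section Cosets

variable {A K : Type*} [CommRing A] [CommRing K] [Algebra A K]

/-- A form over `K` is integral over `A` if its coefficients come from `A`. -/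
def BQ.IsIntegralOver (A : Type*) {K : Type*} [CommRing A] [CommRing K] [Algebra A K]
    (f : BQ K) : Prop :=
  ∃ g : BQ A, g.map (algebraMap A K) = f

theorem BQ.isIntegralOver_iff {f : BQ K} : f.IsIntegralOver A ↔
    f.a ∈ Set.range (algebraMap A K) ∧ f.b ∈ Set.range (algebraMap A K) ∧
      f.c ∈ Set.range (algebraMap A K) ∧ f.d ∈ Set.range (algebraMap A K) ∧
      f.e ∈ Set.range (algebraMap A K) := by
  constructor
  · rintro ⟨g, rfl⟩
    exact ⟨⟨_, rfl⟩, ⟨_, rfl⟩, ⟨_, rfl⟩, ⟨_, rfl⟩, ⟨_, rfl⟩⟩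
  · rintro ⟨⟨a, ha⟩, ⟨b, hb⟩, ⟨c, hc⟩, ⟨d, hd⟩, ⟨e, he⟩⟩
    exact ⟨⟨a, b, c, d, e⟩, BQ.ext ha hb hc hd he⟩

/-- Two matrices over `K` present the same coset in `PGL₂(A)\PGL₂(K)`: they differ by left
multiplication by `GL₂(A)` and by a scalar in `Kˣ`. -/
def CosetRel (A : Type*) {K : Type*} [CommRing A] [CommRing K] [Algebra A K]
    (m n : Mat2 K) : Prop :=
  ∃ (u : (Mat2 A)ˣ) (z : Kˣ), n = z • ((u : Mat2 A).map (algebraMap A K) * m)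

namespace CosetRel

theorem of_isUnit {u : Mat2 A} (hu : IsUnit u) {z : K} (hz : IsUnit z) (m : Mat2 K) :
    CosetRel A m (z • (u.map (algebraMap A K) * m)) := by
  obtain ⟨u, rfl⟩ := hu
  obtain ⟨z, rfl⟩ := hz
  exact ⟨u, z, rfl⟩

theorem mul_left {u : Mat2 A} (hu : IsUnit u) (m : Mat2 K) :
    CosetRel A m (u.map (algebraMap A K) * m) := by
  simpa only [one_smul] using of_isUnit hu isUnit_one m

theorem smul (A : Type*) [CommRing A] [Algebra A K] {z : K} (hz : IsUnit z) (m : Mat2 K) :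
    CosetRel A m (z • m) := by
  simpa only [Mat2.map_one, one_mul] using of_isUnit (A := A) isUnit_one hz m

@[refl]
theorem refl (m : Mat2 K) : CosetRel A m m := ⟨1, 1, by simp⟩

@[symm]
theorem symm {m n : Mat2 K} : CosetRel A m n → CosetRel A n m := by
  rintro ⟨u, z, rfl⟩
  refine ⟨u⁻¹, z⁻¹, ?_⟩
  rw [mul_smul_comm, ← mul_assoc, ← Mat2.map_mul, u.inv_mul, Mat2.map_one, one_mul,
    inv_smul_smul]

@[trans]
theorem trans {l m n : Mat2 K} : CosetRel A l m → CosetRel A m n → CosetRel A l n := by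
  rintro ⟨u, z, rfl⟩ ⟨v, w, rfl⟩
  refine ⟨v * u, w * z, ?_⟩
  rw [mul_smul_comm, smul_smul, Units.val_mul, Mat2.map_mul, mul_assoc]

theorem mul_right {m n : Mat2 K} (h : CosetRel A m n) (k : Mat2 K) :
    CosetRel A (m * k) (n * k) := by
  obtain ⟨u, z, rfl⟩ := h
  exact ⟨u, z, by rw [smul_mul_assoc, mul_assoc]⟩

theorem map {B L : Type*} [CommRing B] [CommRing L] [Algebra B L] [Algebra A B] [Algebra K L]
    [Algebra A L] [IsScalarTower A K L] [IsScalarTower A B L] {m n : Mat2 K}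
    (h : CosetRel A m n) :
    CosetRel B (m.map (algebraMap K L)) (n.map (algebraMap K L)) := by
  obtain ⟨u, z, rfl⟩ := h
  have map_u : ((u : Mat2 A).map (algebraMap A K)).map (algebraMap K L) =
      ((u : Mat2 A).map (algebraMap A B)).map (algebraMap B L) := by
    simp only [Mat2.map, ← IsScalarTower.algebraMap_apply]
  rw [Units.smul_def, Mat2.map_smul, Mat2.map_mul, map_u]
  exact of_isUnit (Mat2.isUnit_map _ u.isUnit) (z.isUnit.map _) _

theorem isUnit_det {m n : Mat2 K} (h : CosetRel A m n) (hm : IsUnit m.det) : IsUnit n.det := by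
  obtain ⟨u, z, rfl⟩ := h
  rw [Units.smul_def, Mat2.det_smul, Mat2.det_mul, Mat2.det_map]
  exact (z.isUnit.pow 2).mul (((Mat2.isUnit_iff_isUnit_det.1 u.isUnit).map _).mul hm)

theorem isIntegralOver_twist {m n : Mat2 K} (h : CosetRel A m n) {f : BQ K}
    (hf : (f.twist m).IsIntegralOver A) : (f.twist n).IsIntegralOver A := by
  obtain ⟨u, z, rfl⟩ := h
  obtain ⟨g, hg⟩ := hf
  refine ⟨g.twist u, ?_⟩
  rw [BQ.twist_units_smul, BQ.twist_mul, ← hg,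
    BQ.map_twist _ (Mat2.isUnit_iff_isUnit_det.1 u.isUnit)]

theorem lower (u : Aˣ) (t : A) (d x : K) :
    CosetRel A (Mat2.lower d x)
      (Mat2.lower (algebraMap A K u * d) (algebraMap A K t * d + x)) := by
  have hu : IsUnit (Mat2.lower (u : A) t) := by
    rw [Mat2.isUnit_iff_isUnit_det, Mat2.det_lower]
    exact u.isUnit
  simpa only [Mat2.map_lower, Mat2.lower_mul_lower] using mul_left hu (Mat2.lower d x)

end CosetRel

variable (A)

/-- The relation `CosetRel` as a setoid. -/
def cosetSetoid (K : Type*) [CommRing K] [Algebra A K] : Setoid (Mat2 K) where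
  r := CosetRel A
  iseqv := ⟨CosetRel.refl, CosetRel.symm, CosetRel.trans⟩

/-- The set `PGL₂(K)_F` of the `m` for which `m·F` has coefficients in `A`, presented by
matrices in `GL₂(K)`. -/
def integralTwists (F : BQ K) : Set (Mat2 K) :=
  {m | IsUnit m.det ∧ (F.twist m).IsIntegralOver A}

/-- The coset space `PGL₂(A)\PGL₂(K)_F`. -/
def IntegralCosets (F : BQ K) : Type _ :=
  Quotient ((cosetSetoid A K).comap ((↑) : integralTwists A F → Mat2 K))

variable {A}

theorem CosetRel.mem_integralTwists {F : BQ K} {m n : Mat2 K} (h : CosetRel A m n)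
    (hm : m ∈ integralTwists A F) : n ∈ integralTwists A F :=
  ⟨h.isUnit_det hm.1, h.isIntegralOver_twist hm.2⟩

theorem one_mem_integralTwists (f : BQ A) : 1 ∈ integralTwists A (f.map (algebraMap A K)) :=
  ⟨by simp, f, by simp⟩

end Cosets

section BaseChange

variable {A K B L : Type*} [CommRing A] [CommRing K] [CommRing B] [CommRing L] [Algebra A K]
  [Algebra B L] [Algebra A B] [Algebra K L] [Algebra A L] [IsScalarTower A K L]
  [IsScalarTower A B L]

variable (K L) in
theorem BQ.map_algebraMap (f : BQ A) :
    (f.map (algebraMap A K)).map (algebraMap K L) = f.map (algebraMap A L) := by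
  simp only [BQ.map, ← IsScalarTower.algebraMap_apply]

theorem BQ.IsIntegralOver.map {F : BQ K} (h : F.IsIntegralOver A) :
    (F.map (algebraMap K L)).IsIntegralOver B := by
  obtain ⟨g, rfl⟩ := h
  exact ⟨g.map (algebraMap A B), by rw [BQ.map_algebraMap, BQ.map_algebraMap]⟩

theorem map_mem_integralTwists {F : BQ K} {m : Mat2 K} (hm : m ∈ integralTwists A F) :
    m.map (algebraMap K L) ∈ integralTwists B (F.map (algebraMap K L)) := by
  refine ⟨?_, ?_⟩
  · rw [Mat2.det_map]
    exact hm.1.map _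
  · rw [← BQ.map_twist _ hm.1]
    exact hm.2.map

variable (B L) in
/-- The map `PGL₂(A)\PGL₂(K)_F → PGL₂(B)\PGL₂(L)_F` induced by a base change from `A ⊆ K` to
`B ⊆ L`. -/
def IntegralCosets.baseChange {F : BQ K} :
    IntegralCosets A F → IntegralCosets B (F.map (algebraMap K L)) :=
  Quotient.map (fun m ↦ ⟨m.1.map (algebraMap K L), map_mem_integralTwists m.2⟩)
    fun _ _ h ↦ h.map

end BaseChange

/-! ### Cosets over a valuation ring -/

section Pivot

variable {A K : Type*} [CommRing A] [Field K] [Algebra A K]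

theorem cosetRel_lower_of_eq_mul {m : Mat2 K} (hs : m.s ≠ 0) {t : A}
    (hq : m.q = algebraMap A K t * m.s) :
    CosetRel A m (Mat2.lower (m.det / m.s ^ 2) (m.r / m.s)) := by
  have hu : IsUnit (⟨1, -t, 0, 1⟩ : Mat2 A) := by
    simp [Mat2.isUnit_iff_isUnit_det, Mat2.det]
  convert CosetRel.of_isUnit hu (inv_ne_zero hs).isUnit m using 1
  ext <;> simp only [Mat2.lower, Mat2.smul_def, Mat2.mul_def, Mat2.map, Mat2.det, map_one,
    map_neg, map_zero, hq] <;> field_simp <;> ring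

theorem cosetRel_map_mul_of_s_eq_one {n : Mat2 A} (hs : n.s = 1) (w : Mat2 A) :
    CosetRel A ((n * w).map (algebraMap A K))
      ((Mat2.lower n.det n.r * w).map (algebraMap A K)) := by
  have hs' : (n.map (algebraMap A K)).s = 1 := by simp [Mat2.map, hs]
  have h := cosetRel_lower_of_eq_mul (m := n.map (algebraMap A K)) (t := n.q)
    (by simp [hs']) (by rw [hs', mul_one]; rfl)
  rw [hs', one_pow, div_one, div_one, Mat2.det_map] at h
  simp only [Mat2.map_mul, Mat2.map_lower]
  exact h.mul_right _

theorem sq_dvd_disc_of_isIntegralOver_twist_lower [IsFractionRing A K] {f : BQ A} {d : A}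
    (hd : algebraMap A K d ≠ 0)
    (h : ((f.map (algebraMap A K)).twist (Mat2.lower (algebraMap A K d) 0)).IsIntegralOver A) :
    d ^ 2 ∣ f.disc := by
  obtain ⟨g, hg⟩ := h
  rw [BQ.twist_def, Mat2.det_lower, Ring.inverse_eq_inv'] at hg
  have coeff_d : algebraMap A K g.d =
      (algebraMap A K d)⁻¹ ^ 2 * (algebraMap A K f.d * algebraMap A K d) := by
    simpa [BQ.map, BQ.smul_def, BQ.subst, Mat2.lower] using congrArg BQ.d hg
  have coeff_e : algebraMap A K g.e = (algebraMap A K d)⁻¹ ^ 2 * algebraMap A K f.e := by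
    simpa [BQ.map, BQ.smul_def, BQ.subst, Mat2.lower] using congrArg BQ.e hg
  refine BQ.sq_dvd_disc ⟨g.d, IsFractionRing.injective A K ?_⟩
    ⟨g.e, IsFractionRing.injective A K ?_⟩
  · rw [map_mul, coeff_d]
    field_simp
  · rw [map_mul, map_pow, coeff_e]
    field_simp

theorem cosetRel_map_lower_of_dvd_sub [IsDomain A] {D d d' x x' : A} (hd : d ∣ D) (hd' : d' ∣ D)
    (h_d : D ∣ d - d') (h_x : D ∣ x - x') :
    CosetRel A ((Mat2.lower d x).map (algebraMap A K))
      ((Mat2.lower d' x').map (algebraMap A K)) := by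
  obtain ⟨u, hu⟩ : Associated d d' := associated_of_dvd_dvd
    ((dvd_sub_right dvd_rfl).1 (hd.trans h_d)) ((dvd_sub_left dvd_rfl).1 (hd'.trans h_d))
  obtain ⟨t, ht⟩ := (dvd_sub_comm.1 (hd.trans h_x))
  have h := CosetRel.lower u t (algebraMap A K d) (algebraMap A K x)
  rwa [← map_mul, ← map_mul, ← map_add, mul_comm (u : A), hu, mul_comm t, ← ht, sub_add_cancel,
    ← Mat2.map_lower, ← Mat2.map_lower] at h

end Pivot

section ValuationRing

variable {A K : Type*} [CommRing A] [IsDomain A] [ValuationRing A] [Field K] [Algebra A K]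
  [IsFractionRing A K]

theorem valuation_le_valuation_iff {a b : K} :
    ValuationRing.valuation A K a ≤ ValuationRing.valuation A K b ↔
      ∃ c : A, a = algebraMap A K c * b := by
  have key : ValuationRing.valuation A K a ≤ ValuationRing.valuation A K b ↔
      ∃ c : A, c • b = a := Iff.rfl
  simp only [key, Algebra.smul_def, eq_comm]

theorem exists_cosetRel_lower {m : Mat2 K} (hm : m.det ≠ 0) :
    ∃ d x : K, CosetRel A m (Mat2.lower d x) := by
  have of_le {m : Mat2 K} (hm : m.det ≠ 0)
      (h : ValuationRing.valuation A K m.q ≤ ValuationRing.valuation A K m.s) :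
      ∃ d x : K, CosetRel A m (Mat2.lower d x) := by
    obtain ⟨t, ht⟩ := valuation_le_valuation_iff.1 h
    have hs : m.s ≠ 0 := fun hs ↦ hm (by simp [Mat2.det, ht, hs])
    exact ⟨_, _, cosetRel_lower_of_eq_mul hs ht⟩
  rcases le_total (ValuationRing.valuation A K m.q) (ValuationRing.valuation A K m.s) with h | h
  · exact of_le hm h
  · have swap_rel : CosetRel A m (Mat2.swap * m) := by
      simpa only [Mat2.map_swap] using CosetRel.mul_left Mat2.isUnit_swap m
    obtain ⟨d, x, hdx⟩ := of_le (m := Mat2.swap * m)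
      (swap_rel.isUnit_det hm.isUnit).ne_zero (by simpa only [Mat2.swap_mul] using h)
    exact ⟨d, x, swap_rel.trans hdx⟩

theorem exists_eq_smul_map {m : Mat2 K} (hm : m.det ≠ 0) :
    ∃ z : K, z ≠ 0 ∧ ∃ n : Mat2 A, m = z • n.map (algebraMap A K) ∧
      (n.p = 1 ∨ n.q = 1 ∨ n.r = 1 ∨ n.s = 1) := by
  let entry : Fin 4 → K := ![m.p, m.q, m.r, m.s]
  obtain ⟨i, hi⟩ := Finite.exists_max fun j ↦ ValuationRing.valuation A K (entry j)
  choose c hc using fun j ↦ valuation_le_valuation_iff.1 (hi j)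
  have hm_eq : m = entry i • (⟨c 0, c 1, c 2, c 3⟩ : Mat2 A).map (algebraMap A K) := by
    ext <;> simp only [Mat2.smul_def, Mat2.map, mul_comm (entry i), ← hc] <;> rfl
  have hz : entry i ≠ 0 := by
    intro h0
    rw [hm_eq, h0, Mat2.det_smul, zero_pow two_ne_zero, zero_mul] at hm
    exact hm rfl
  refine ⟨entry i, hz, _, hm_eq, ?_⟩
  have hci : c i = 1 := IsFractionRing.injective A K <| by
    rw [map_one]
    exact mul_right_cancel₀ hz (by rw [← hc i, one_mul])
  fin_cases i
  exacts [.inl hci, .inr (.inl hci), .inr (.inr (.inl hci)), .inr (.inr (.inr hci))]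

-- Cartan decomposition: `lower d x * w` is the product of `diag(d, 1)` and of the unimodular
-- matrix `lower 1 x * w`.
theorem exists_cosetRel_map_lower_mul {m : Mat2 K} (hm : m.det ≠ 0) :
    ∃ d x : A, ∃ w ∈ ({1, Mat2.swap} : Set (Mat2 A)),
      CosetRel A m ((Mat2.lower d x * w).map (algebraMap A K)) := by
  have of_bottom {n : Mat2 A} (hn : n.r = 1 ∨ n.s = 1) :
      ∃ d x : A, ∃ w ∈ ({1, Mat2.swap} : Set (Mat2 A)),
        CosetRel A (n.map (algebraMap A K)) ((Mat2.lower d x * w).map (algebraMap A K)) := by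
    rcases hn with hr | hs
    · have h := cosetRel_map_mul_of_s_eq_one (K := K) (n := n * Mat2.swap)
        (by simp only [Mat2.mul_swap, hr]) Mat2.swap
      rw [mul_assoc, Mat2.swap_mul_swap, mul_one] at h
      exact ⟨_, _, Mat2.swap, .inr rfl, h⟩
    · have h := cosetRel_map_mul_of_s_eq_one (K := K) hs 1
      rw [mul_one] at h
      exact ⟨_, _, 1, .inl rfl, h⟩
  obtain ⟨z, hz, n, rfl, hn⟩ := exists_eq_smul_map (A := A) hm
  have smul_rel := (CosetRel.smul A hz.isUnit (n.map (algebraMap A K))).symm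
  by_cases bottom : n.r = 1 ∨ n.s = 1
  · obtain ⟨d, x, w, hw, h⟩ := of_bottom bottom
    exact ⟨d, x, w, hw, smul_rel.trans h⟩
  · have top : (Mat2.swap * n).r = 1 ∨ (Mat2.swap * n).s = 1 := by
      simp only [Mat2.swap_mul]
      tauto
    have swap_rel := CosetRel.mul_left (A := A) Mat2.isUnit_swap (n.map (algebraMap A K))
    rw [← Mat2.map_mul] at swap_rel
    obtain ⟨d, x, w, hw, h⟩ := of_bottom top
    exact ⟨d, x, w, hw, smul_rel.trans (swap_rel.trans h)⟩

theorem exists_cosetRel_of_mem_integralTwists {f : BQ A} {m : Mat2 K}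
    (hm : m ∈ integralTwists A (f.map (algebraMap A K))) :
    ∃ d x : A, ∃ w ∈ ({1, Mat2.swap} : Set (Mat2 A)), d ^ 2 ∣ f.disc ∧
      CosetRel A m ((Mat2.lower d x * w).map (algebraMap A K)) := by
  obtain ⟨d, x, w, hw, h⟩ := exists_cosetRel_map_lower_mul (A := A) hm.1.ne_zero
  refine ⟨d, x, w, hw, ?_, h⟩
  have unimodular : IsUnit (Mat2.lower 1 x * w).det ∧
      (f.twist (Mat2.lower 1 x * w)).disc = f.disc := by
    rw [Mat2.det_mul, Mat2.det_lower, one_mul, BQ.twist_mul, BQ.disc_twist_lower]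
    rcases hw with rfl | rfl
    · simp
    · exact ⟨Mat2.isUnit_iff_isUnit_det.1 Mat2.isUnit_swap, BQ.disc_twist_swap f⟩
  have factor : Mat2.lower d x * w = Mat2.lower d 0 * (Mat2.lower 1 x * w) := by
    rw [← mul_assoc, Mat2.lower_mul_lower, mul_one, zero_mul, zero_add]
  obtain ⟨det_unit, integral⟩ := h.mem_integralTwists hm
  rw [Mat2.det_map, Mat2.det_mul, Mat2.det_lower, map_mul] at det_unit
  rw [factor, Mat2.map_mul, BQ.twist_mul, ← BQ.map_twist _ unimodular.1, Mat2.map_lower,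
    map_zero] at integral
  rw [← unimodular.2]
  exact sq_dvd_disc_of_isIntegralOver_twist_lower (isUnit_of_mul_isUnit_left det_unit).ne_zero
    integral

theorem cosetRel_one_of_isUnit_disc {f : BQ A} (hf : IsUnit f.disc) {m : Mat2 K}
    (hm : m ∈ integralTwists A (f.map (algebraMap A K))) : CosetRel A 1 m := by
  obtain ⟨d, x, w, hw, hd, h⟩ := exists_cosetRel_of_mem_integralTwists hm
  have isUnit_lower : IsUnit (Mat2.lower d x) := by
    rw [Mat2.isUnit_iff_isUnit_det, Mat2.det_lower]
    exact (isUnit_pow_iff two_ne_zero).1 (isUnit_of_dvd_unit hd hf)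
  have isUnit_w : IsUnit w := by
    rcases hw with rfl | rfl
    exacts [isUnit_one, Mat2.isUnit_swap]
  have one_rel := CosetRel.mul_left (isUnit_lower.mul isUnit_w) (1 : Mat2 K)
  rw [mul_one] at one_rel
  exact one_rel.trans h.symm

theorem subsingleton_integralCosets {f : BQ A} (hf : IsUnit f.disc) :
    Subsingleton (IntegralCosets A (f.map (algebraMap A K))) := by
  refine ⟨Quotient.ind₂ fun m n ↦ Quotient.sound ?_⟩
  exact (cosetRel_one_of_isUnit_disc hf m.2).symm.trans (cosetRel_one_of_isUnit_disc hf n.2)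

theorem finite_integralCosets {f : BQ A} [Finite (A ⧸ Ideal.span {f.disc})] :
    Finite (IntegralCosets A (f.map (algebraMap A K))) := by
  choose d x w hw hd hrel using fun m : integralTwists A (f.map (algebraMap A K)) ↦
    exists_cosetRel_of_mem_integralTwists m.2
  let invariant (m : integralTwists A (f.map (algebraMap A K))) :
      (A ⧸ Ideal.span {f.disc}) × (A ⧸ Ideal.span {f.disc}) × ({1, Mat2.swap} : Set (Mat2 A)) :=
    (Ideal.Quotient.mk _ (d m), Ideal.Quotient.mk _ (x m), ⟨w m, hw m⟩)
  have rel_of_eq {m n} (h : invariant m = invariant n) : CosetRel A m.1 n.1 := by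
    obtain ⟨h_d, h_x, h_w⟩ : _ ∧ _ ∧ _ := by
      simpa only [invariant, Prod.mk.injEq, Subtype.mk.injEq] using h
    rw [Ideal.Quotient.mk_eq_mk_iff_sub_mem, Ideal.mem_span_singleton] at h_d h_x
    have lower_rel : CosetRel A ((Mat2.lower (d m) (x m)).map (algebraMap A K))
        ((Mat2.lower (d n) (x n)).map (algebraMap A K)) :=
      cosetRel_map_lower_of_dvd_sub (dvd_of_mul_left_dvd (sq (d m) ▸ hd m))
        (dvd_of_mul_left_dvd (sq (d n) ▸ hd n)) h_d h_x
    have hrel_n := hrel n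
    rw [← h_w, Mat2.map_mul] at hrel_n
    refine (hrel m).trans (.trans ?_ hrel_n.symm)
    rw [Mat2.map_mul]
    exact lower_rel.mul_right _
  refine Finite.of_injective (fun q : IntegralCosets A _ ↦ invariant (Quotient.out q)) ?_
  intro q r h
  rw [← Quotient.out_eq q, ← Quotient.out_eq r]
  exact Quotient.sound (rel_of_eq h)

end ValuationRing

/-! ### Integrality and approximation in `ℚ` -/

section Padic

variable {p : ℕ} [Fact p.Prime]

theorem finite_padicInt_quotient_span {a : ℤ_[p]} (ha : a ≠ 0) :
    Finite (ℤ_[p] ⧸ Ideal.span {a}) := by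
  obtain ⟨n, hn⟩ := PadicInt.ideal_eq_span_pow_p (s := Ideal.span {a}) (by simpa using ha)
  refine IsLocalRing.finite_quotient_iff.2 ⟨n, ?_⟩
  rw [hn, PadicInt.maximalIdeal_eq_span_p, Ideal.span_singleton_pow]

theorem mem_range_algebraMap_padicInt {x : ℚ_[p]} :
    x ∈ Set.range (algebraMap ℤ_[p] ℚ_[p]) ↔ ‖x‖ ≤ 1 :=
  ⟨by rintro ⟨y, rfl⟩; exact y.norm_le_one, fun h ↦ ⟨⟨x, h⟩, rfl⟩⟩

theorem isIntFormP_iff_isIntegralOver {F : BQ ℚ_[p]} :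
    IsIntFormP p F ↔ F.IsIntegralOver ℤ_[p] := by
  simp only [BQ.isIntegralOver_iff, mem_range_algebraMap_padicInt, IsIntFormP]

theorem isIntUnitMatP_iff {m : Mat2 ℚ_[p]} :
    IsIntUnitMatP p m ↔ ∃ u : Mat2 ℤ_[p], IsUnit u.det ∧ u.map (algebraMap ℤ_[p] ℚ_[p]) = m := by
  have norm_det (u : Mat2 ℤ_[p]) : ‖(u.map (algebraMap ℤ_[p] ℚ_[p])).det‖ = ‖u.det‖ := by
    rw [Mat2.det_map]; rfl
  constructor
  · rintro ⟨hp, hq, hr, hs, hdet⟩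
    let u : Mat2 ℤ_[p] := ⟨⟨m.p, hp⟩, ⟨m.q, hq⟩, ⟨m.r, hr⟩, ⟨m.s, hs⟩⟩
    exact ⟨u, PadicInt.isUnit_iff.2 ((norm_det u).symm.trans hdet), rfl⟩
  · rintro ⟨u, hu, rfl⟩
    exact ⟨u.p.norm_le_one, u.q.norm_le_one, u.r.norm_le_one, u.s.norm_le_one,
      (norm_det u).trans (PadicInt.isUnit_iff.1 hu)⟩

theorem exists_unit_mul_eq_of_norm_eq {a b : ℚ_[p]} (hb : b ≠ 0) (h : ‖a‖ = ‖b‖) :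
    ∃ u : ℤ_[p]ˣ, algebraMap ℤ_[p] ℚ_[p] u * b = a := by
  have norm_div_eq_one : ‖a / b‖ = 1 := by rw [norm_div, h, div_self (norm_ne_zero_iff.2 hb)]
  exact ⟨PadicInt.mkUnits norm_div_eq_one, div_mul_cancel₀ a hb⟩

end Padic

section Rational

theorem mem_range_algebraMap_int_iff {q : ℚ} : q ∈ Set.range (algebraMap ℤ ℚ) ↔
    ∀ p : Nat.Primes, algebraMap ℚ ℚ_[p] q ∈ Set.range (algebraMap ℤ_[p] ℚ_[p]) := by
  simp only [mem_range_algebraMap_padicInt, eq_ratCast]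
  constructor
  · rintro ⟨n, rfl⟩ p
    simpa using Padic.norm_int_le_one n
  · intro h
    suffices h_den : q.den = 1 from ⟨q.num, (Rat.den_eq_one_iff q).1 h_den⟩
    by_contra h_den
    obtain ⟨p, hp, hpd⟩ := Nat.exists_prime_and_dvd h_den
    have : Fact p.Prime := ⟨hp⟩
    have norm_den := PadicInt.isUnit_iff.1 (PadicInt.isUnit_den q (h ⟨p, hp⟩))
    exact (PadicInt.norm_natCast_lt_one_iff.2 hpd).ne norm_den

theorem finite_norm_ne_one {q : ℚ} (hq : q ≠ 0) :
    {p : Nat.Primes | ‖(q : ℚ_[p])‖ ≠ 1}.Finite := by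
  refine ((Finset.finite_toSet (q.num.natAbs.primeFactors ∪ q.den.primeFactors)).preimage
    Nat.Primes.coe_nat_injective.injOn).subset fun (p : Nat.Primes) hp ↦ ?_
  by_contra h_mem
  change (p : ℕ) ∉ q.num.natAbs.primeFactors ∪ q.den.primeFactors at h_mem
  simp only [Finset.mem_union, Nat.mem_primeFactors_of_ne_zero
    (Int.natAbs_ne_zero.2 (Rat.num_ne_zero.2 hq)), Nat.mem_primeFactors_of_ne_zero q.den_ne_zero,
    p.2, true_and, not_or, ← p.2.coprime_iff_not_dvd] at h_mem
  obtain ⟨num_coprime, den_coprime⟩ := h_mem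
  have norm_num : ‖(q.num : ℚ_[p])‖ = 1 := by
    rw [Padic.norm_intCast_eq_one_iff, Int.isCoprime_iff_gcd_eq_one, Int.gcd_comm]
    exact num_coprime
  refine hp ?_
  rw [Rat.cast_def, norm_div, norm_num, Padic.norm_natCast_eq_one_iff.2 den_coprime, div_one]

theorem exists_rat_norm_eq (α : ∀ p : Nat.Primes, ℚ_[p]) (hα : ∀ p, α p ≠ 0)
    (h_fin : {p | ‖α p‖ ≠ 1}.Finite) :
    ∃ A : ℚ, A ≠ 0 ∧ ∀ p : Nat.Primes, ‖(A : ℚ_[p])‖ = ‖α p‖ := by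
  refine ⟨∏ p ∈ h_fin.toFinset, (p : ℚ) ^ (α p).valuation,
    Finset.prod_ne_zero_iff.2 fun p _ ↦ zpow_ne_zero _ (Nat.cast_ne_zero.2 p.2.ne_zero),
    fun p ↦ ?_⟩
  have at_self : ‖(p : ℚ_[p]) ^ (α p).valuation‖ = ‖α p‖ := by
    rw [Padic.norm_p_zpow, Padic.norm_eq_zpow_neg_valuation (hα p)]
  have at_other (q : Nat.Primes) (hq : q ≠ p) : ‖(q : ℚ_[p]) ^ (α q).valuation‖ = 1 := by
    have : ((p : ℕ)).Coprime q :=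
      (Nat.coprime_primes p.2 q.2).2 fun h ↦ hq (Subtype.ext h.symm)
    rw [norm_zpow, Padic.norm_natCast_eq_one_iff.2 this, one_zpow]
  push_cast
  rw [norm_prod, Finset.prod_eq_single p (fun q _ ↦ at_other q) (fun hp ↦ ?_), at_self]
  rw [at_self]
  simpa using hp

theorem exists_rat_norm_sub_le_one_and_norm_le_one {p : ℕ} [Fact p.Prime] (y : ℚ_[p]) :
    ∃ r : ℚ, ‖(r : ℚ_[p]) - y‖ ≤ 1 ∧
      ∀ (q : ℕ) [Fact q.Prime], q ≠ p → ‖(r : ℚ_[q])‖ ≤ 1 := by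
  have prime_p : p.Prime := Fact.out
  obtain ⟨k, hk⟩ := pow_unbounded_of_one_lt ‖y‖ (Nat.one_lt_cast.2 prime_p.one_lt : (1 : ℝ) < p)
  have pow_pos : 0 < (p : ℝ) ^ k := by
    have := prime_p.pos
    positivity
  have norm_pow : ‖(p : ℚ_[p]) ^ k‖ = ((p : ℝ) ^ k)⁻¹ := by rw [norm_pow, Padic.norm_p, inv_pow]
  obtain ⟨Y, hY⟩ : p ^ k * y ∈ Set.range (algebraMap ℤ_[p] ℚ_[p]) := by
    rw [mem_range_algebraMap_padicInt, norm_mul, norm_pow, inv_mul_le_one₀ pow_pos]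
    exact hk.le
  obtain ⟨n, hn⟩ := (PadicInt.denseRange_natCast (p := p)).exists_dist_lt Y (inv_pos.2 pow_pos)
  have norm_sub_lt : ‖p ^ k * y - n‖ < ‖(p : ℚ_[p]) ^ k‖ := by
    rw [dist_eq_norm, PadicInt.norm_def, PadicInt.coe_sub, PadicInt.coe_natCast] at hn
    rwa [← hY, norm_pow]
  refine ⟨n / (p : ℚ) ^ k, ?_, fun q _ hq ↦ ?_⟩
  · have : ((n / (p : ℚ) ^ k : ℚ) : ℚ_[p]) - y = -((p ^ k * y - n) / p ^ k) := by
      have : (p : ℚ_[p]) ≠ 0 := Nat.cast_ne_zero.2 prime_p.ne_zero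
      push_cast
      field_simp
      ring
    rw [this, norm_neg, norm_div]
    exact div_le_one_of_le₀ norm_sub_lt.le (norm_nonneg _)
  · have : q.Coprime p := (Nat.coprime_primes Fact.out prime_p).2 hq
    push_cast
    rw [norm_div, _root_.norm_pow, Padic.norm_natCast_eq_one_iff.2 this, one_pow, div_one]
    exact_mod_cast Padic.norm_int_le_one n

theorem exists_rat_norm_sub_le_one (y : ∀ p : Nat.Primes, ℚ_[p])
    (h_fin : {p | ¬ ‖y p‖ ≤ 1}.Finite) :
    ∃ x : ℚ, ∀ p : Nat.Primes, ‖(x : ℚ_[p]) - y p‖ ≤ 1 := by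
  choose r sub_self at_other using fun p ↦ exists_rat_norm_sub_le_one_and_norm_le_one (y p)
  refine ⟨∑ p ∈ h_fin.toFinset, r p, fun p ↦ ?_⟩
  push_cast
  change _ ∈ PadicInt.subring p
  by_cases hp : ‖y p‖ ≤ 1
  · refine sub_mem (sum_mem fun q hq ↦ at_other q p fun h ↦ ?_) hp
    exact h_fin.mem_toFinset.1 hq (Subtype.ext h ▸ hp)
  · rw [← Finset.add_sum_erase _ _ (h_fin.mem_toFinset.2 hp), add_sub_right_comm]
    refine add_mem (sub_self p) (sum_mem fun q hq ↦ at_other q p fun h ↦ ?_)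
    exact Finset.ne_of_mem_erase hq (Subtype.ext h.symm)

end Rational

/-! ### Local-global principle for cosets -/

section LocalGlobal

theorem BQ.isIntegralOver_int_iff {F : BQ ℚ} : F.IsIntegralOver ℤ ↔
    ∀ p : Nat.Primes, (F.map (algebraMap ℚ ℚ_[p])).IsIntegralOver ℤ_[p] := by
  simp only [BQ.isIntegralOver_iff, mem_range_algebraMap_int_iff, BQ.map, forall_and]

theorem exists_units_map_eq_of_forall_prime {δ : Mat2 ℚ} (u : ∀ p : Nat.Primes, (Mat2 ℤ_[p])ˣ)
    (hu : ∀ p : Nat.Primes,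
      (u p : Mat2 ℤ_[p]).map (algebraMap ℤ_[p] ℚ_[p]) = δ.map (algebraMap ℚ ℚ_[p])) :
    ∃ v : (Mat2 ℤ)ˣ, (v : Mat2 ℤ).map (algebraMap ℤ ℚ) = δ := by
  obtain ⟨a, ha⟩ := (mem_range_algebraMap_int_iff (q := δ.p)).2 fun p ↦
    ⟨_, congrArg Mat2.p (hu p)⟩
  obtain ⟨b, hb⟩ := (mem_range_algebraMap_int_iff (q := δ.q)).2 fun p ↦
    ⟨_, congrArg Mat2.q (hu p)⟩
  obtain ⟨c, hc⟩ := (mem_range_algebraMap_int_iff (q := δ.r)).2 fun p ↦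
    ⟨_, congrArg Mat2.r (hu p)⟩
  obtain ⟨d, hd⟩ := (mem_range_algebraMap_int_iff (q := δ.s)).2 fun p ↦
    ⟨_, congrArg Mat2.s (hu p)⟩
  let v : Mat2 ℤ := ⟨a, b, c, d⟩
  have hv : v.map (algebraMap ℤ ℚ) = δ := Mat2.ext ha hb hc hd
  have det_u (p : Nat.Primes) :
      algebraMap ℤ_[p] ℚ_[p] (u p : Mat2 ℤ_[p]).det = algebraMap ℚ ℚ_[p] δ.det := by
    rw [← Mat2.det_map, hu, Mat2.det_map]
  obtain ⟨e, he⟩ := mem_range_algebraMap_int_iff (q := δ.det⁻¹).2 fun p ↦ by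
    obtain ⟨w, hw⟩ := Mat2.isUnit_iff_isUnit_det.1 (u p).isUnit
    refine ⟨↑w⁻¹, ?_⟩
    rw [map_inv₀, ← det_u, ← hw]
    exact eq_inv_of_mul_eq_one_left (by rw [← map_mul, w.inv_mul, map_one])
  have isUnit_det_δ (p : Nat.Primes) : IsUnit (algebraMap ℚ ℚ_[p] δ.det) := by
    rw [← det_u]
    exact (Mat2.isUnit_iff_isUnit_det.1 (u p).isUnit).map _
  have det_ne_zero : δ.det ≠ 0 := fun h ↦
    (isUnit_det_δ ⟨2, Nat.prime_two⟩).ne_zero (by rw [h, map_zero])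
  have isUnit_det : IsUnit v.det := by
    refine .of_mul_eq_one e ((algebraMap ℤ ℚ).injective_int ?_)
    rw [map_mul, he, ← Mat2.det_map, hv, mul_inv_cancel₀ det_ne_zero, map_one]
  obtain ⟨v', hv'⟩ := Mat2.isUnit_iff_isUnit_det.2 isUnit_det
  exact ⟨v', hv' ▸ hv⟩

theorem cosetRel_one_int_of_forall_prime {δ : Mat2 ℚ}
    (h : ∀ p : Nat.Primes, CosetRel ℤ_[p] 1 (δ.map (algebraMap ℚ ℚ_[p]))) :
    CosetRel ℤ 1 δ := by
  have det_ne_zero : δ.det ≠ 0 := fun hδ ↦ by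
    have det_unit := (h ⟨2, Nat.prime_two⟩).isUnit_det (by simp)
    rw [Mat2.det_map, hδ, map_zero] at det_unit
    exact not_isUnit_zero det_unit
  choose u z h_eq using h
  have norm_det (p : Nat.Primes) : ‖(δ.det : ℚ_[p])‖ = ‖(z p : ℚ_[p])‖ ^ 2 := by
    have isUnit_det := Mat2.isUnit_iff_isUnit_det.1 (u p).isUnit
    rw [← eq_ratCast (algebraMap ℚ ℚ_[p]), ← Mat2.det_map, h_eq p, mul_one, Units.smul_def,
      Mat2.det_smul, Mat2.det_map, norm_mul, norm_pow]
    exact mul_right_eq_self₀.2 (.inl (PadicInt.isUnit_iff.1 isUnit_det))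
  have h_fin : {p : Nat.Primes | ‖(z p : ℚ_[p])‖ ≠ 1}.Finite := by
    refine (finite_norm_ne_one det_ne_zero).subset fun p hp h ↦ hp ?_
    rwa [norm_det, pow_eq_one_iff_of_nonneg (norm_nonneg _) two_ne_zero] at h
  obtain ⟨A, hA, norm_A⟩ := exists_rat_norm_eq _ (fun p ↦ (z p).ne_zero) h_fin
  choose w hw using fun p ↦ exists_unit_mul_eq_of_norm_eq (Rat.cast_ne_zero.2 hA) (norm_A p).symm
  obtain ⟨v, hv⟩ := exists_units_map_eq_of_forall_prime (δ := A⁻¹ • δ) (fun p ↦ w p • u p) <| by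
    intro p
    have cast_A : (A : ℚ_[p]) ≠ 0 := Rat.cast_ne_zero.2 hA
    rw [Units.val_smul, Units.smul_def, Mat2.map_smul, Mat2.map_smul, h_eq, mul_one,
      Units.smul_def, smul_smul, map_inv₀, eq_ratCast, ← hw p, mul_comm, mul_assoc,
      mul_inv_cancel₀ cast_A, mul_one]
  refine ⟨v, Units.mk0 A hA, ?_⟩
  rw [mul_one, hv, Units.smul_mk0, smul_inv_smul₀ hA]

theorem cosetRel_int_iff {m n : Mat2 ℚ} (hm : IsUnit m.det) :
    CosetRel ℤ m n ↔ ∀ p : Nat.Primes,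
      CosetRel ℤ_[p] (m.map (algebraMap ℚ ℚ_[p])) (n.map (algebraMap ℚ ℚ_[p])) := by
  refine ⟨fun h p ↦ h.map, fun h ↦ ?_⟩
  obtain ⟨m, rfl⟩ := Mat2.isUnit_iff_isUnit_det.2 hm
  have rel_one : CosetRel ℤ 1 (n * (↑m⁻¹ : Mat2 ℚ)) := by
    refine cosetRel_one_int_of_forall_prime fun p ↦ ?_
    simpa only [← Mat2.map_mul, m.mul_inv, Mat2.map_one] using
      (h p).mul_right ((↑m⁻¹ : Mat2 ℚ).map (algebraMap ℚ ℚ_[p]))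
  simpa only [one_mul, m.inv_mul_cancel_right] using rel_one.mul_right (m : Mat2 ℚ)

theorem exists_rat_cosetRel (m : ∀ p : Nat.Primes, Mat2 ℚ_[p]) (hm : ∀ p, IsUnit (m p).det)
    (h_fin : {p : Nat.Primes | ¬ CosetRel ℤ_[p] 1 (m p)}.Finite) :
    ∃ γ : Mat2 ℚ, γ.det ≠ 0 ∧
      ∀ p : Nat.Primes, CosetRel ℤ_[p] (γ.map (algebraMap ℚ ℚ_[p])) (m p) := by
  have normal_form (p : Nat.Primes) : ∃ d x : ℚ_[p], d ≠ 0 ∧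
      CosetRel ℤ_[p] (m p) (Mat2.lower d x) ∧ (CosetRel ℤ_[p] 1 (m p) → d = 1 ∧ x = 0) := by
    by_cases hp : CosetRel ℤ_[p] 1 (m p)
    · exact ⟨1, 0, one_ne_zero, hp.symm, fun _ ↦ ⟨rfl, rfl⟩⟩
    · obtain ⟨d, x, h⟩ := exists_cosetRel_lower (A := ℤ_[p]) (hm p).ne_zero
      have det_unit := h.isUnit_det (hm p)
      rw [Mat2.det_lower] at det_unit
      exact ⟨d, x, det_unit.ne_zero, h, (absurd · hp)⟩
  choose d x d_ne_zero rel_lower trivial_lower using normal_form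
  obtain ⟨A, hA, norm_A⟩ := exists_rat_norm_eq d d_ne_zero <| h_fin.subset fun p hp h ↦ hp (by
    rw [(trivial_lower p h).1, norm_one])
  obtain ⟨X, hX⟩ := exists_rat_norm_sub_le_one (fun p ↦ x p / A) <|
    h_fin.subset fun p hp h ↦ hp (by
      rw [(trivial_lower p h).2, zero_div, norm_zero]
      exact zero_le_one)
  refine ⟨Mat2.lower A (A * X), by rwa [Mat2.det_lower], fun p ↦ .trans ?_ (rel_lower p).symm⟩
  have cast_A : (A : ℚ_[p]) ≠ 0 := Rat.cast_ne_zero.2 hA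
  obtain ⟨u, hu⟩ := exists_unit_mul_eq_of_norm_eq cast_A (norm_A p).symm
  obtain ⟨t, ht⟩ := mem_range_algebraMap_padicInt.2 (hX p)
  convert CosetRel.lower u (-t) (A : ℚ_[p]) (A * X) using 1
  · simp [Mat2.map_lower]
  · rw [hu, map_neg, ht]
    congr 1
    field_simp
    ring

end LocalGlobal

section LocalGlobalCosets

theorem finite_not_isUnit_disc {f : BQ ℤ} (hf : f.disc ≠ 0) :
    {p : Nat.Primes | ¬ IsUnit (f.map (algebraMap ℤ ℤ_[p])).disc}.Finite := by
  refine (finite_norm_ne_one (Int.cast_ne_zero.2 hf)).subset fun p hp h ↦ hp ?_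
  rw [BQ.disc_map, PadicInt.isUnit_iff, eq_intCast, PadicInt.norm_def]
  exact_mod_cast h

variable {f : BQ ℤ}

theorem bijective_baseChange_int (hf : f.disc ≠ 0) :
    Function.Bijective fun (m : IntegralCosets ℤ (f.map (algebraMap ℤ ℚ))) (p : Nat.Primes) ↦
      m.baseChange ℤ_[p] ℚ_[p] := by
  constructor
  · refine Quotient.ind₂ fun m n h ↦ Quotient.sound ?_
    exact (cosetRel_int_iff m.2.1).2 fun p ↦ Quotient.exact (congrFun h p)
  · intro c
    have h_fin : {p : Nat.Primes | ¬ CosetRel ℤ_[p] 1 (c p).out.1}.Finite := by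
      refine (finite_not_isUnit_disc hf).subset fun p hp h ↦ hp ?_
      refine cosetRel_one_of_isUnit_disc h ?_
      convert (c p).out.2 using 1
      rw [BQ.map_algebraMap, BQ.map_algebraMap]
    obtain ⟨γ, hγ, rel⟩ := exists_rat_cosetRel (fun p ↦ (c p).out.1) (fun p ↦ (c p).out.2.1) h_fin
    have γ_mem : γ ∈ integralTwists ℤ (f.map (algebraMap ℤ ℚ)) := by
      refine ⟨hγ.isUnit, BQ.isIntegralOver_int_iff.2 fun p ↦ ?_⟩
      rw [BQ.map_twist _ hγ.isUnit]
      exact ((rel p).symm.mem_integralTwists (c p).out.2).2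
    refine ⟨Quotient.mk _ ⟨γ, γ_mem⟩, funext fun p ↦ ?_⟩
    rw [← Quotient.out_eq (c p)]
    exact Quotient.sound (rel p)

end LocalGlobalCosets

section QuotEquiv

theorem cosetRel_iff {A K : Type*} [CommRing A] [Field K] [Algebra A K] {m n : Mat2 K} :
    CosetRel A m n ↔ ∃ (u : Mat2 K) (z : K),
      (∃ v : Mat2 A, IsUnit v.det ∧ v.map (algebraMap A K) = u) ∧ z ≠ 0 ∧
        n = Mat2.smul z (Mat2.mul u m) := by
  constructor
  · rintro ⟨u, z, rfl⟩
    exact ⟨_, z, ⟨u, Mat2.isUnit_iff_isUnit_det.1 u.isUnit, rfl⟩, z.ne_zero, rfl⟩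
  · rintro ⟨_, z, ⟨v, hv, rfl⟩, hz, rfl⟩
    exact .of_isUnit (Mat2.isUnit_iff_isUnit_det.2 hv) hz.isUnit m

variable {f : BQ ℤ}

/-- The cosets counted by `mGlobal f`, as an instance of `IntegralCosets`. -/
def quotGlobalRelEquiv (f : BQ ℤ) :
    Quot (globalRel f) ≃ IntegralCosets ℤ (f.map (algebraMap ℤ ℚ)) :=
  Quot.congrRight fun _ _ ↦ cosetRel_iff.symm

/-- The cosets counted by `mLocal p f`, as an instance of `IntegralCosets`. The image `F` of `f`
over `ℚ_p` is a variable because `f` reaches `ℚ_p` both through `ℚ` and through `ℤ_p`. -/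
def quotLocalRelEquiv {p : ℕ} [Fact p.Prime] {F : BQ ℚ_[p]}
    (hF : F = f.map (algebraMap ℤ ℚ_[p])) : Quot (localRel p f) ≃ IntegralCosets ℤ_[p] F :=
  Quot.congr
    (Equiv.subtypeEquivRight fun m ↦ by
      subst hF
      exact and_congr_right fun _ ↦ isIntFormP_iff_isIntegralOver)
    fun _ _ ↦ by
      refine Iff.trans ?_ cosetRel_iff.symm
      simp only [← isIntUnitMatP_iff]
      rfl

theorem finite_quot_localRel (hf : f.disc ≠ 0) (p : ℕ) [Fact p.Prime] :
    Finite (Quot (localRel p f)) := by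
  have disc_ne_zero : (f.map (algebraMap ℤ ℤ_[p])).disc ≠ 0 := by
    rwa [BQ.disc_map, eq_intCast, Int.cast_ne_zero]
  have := finite_padicInt_quotient_span disc_ne_zero
  have : Finite (IntegralCosets ℤ_[p]
      ((f.map (algebraMap ℤ ℤ_[p])).map (algebraMap ℤ_[p] ℚ_[p]))) := finite_integralCosets
  exact .of_equiv _ (quotLocalRelEquiv (f.map_algebraMap ℤ_[p] ℚ_[p])).symm

theorem mLocal_eq_one_of_isUnit_disc {p : ℕ} [Fact p.Prime]
    (h : IsUnit (f.map (algebraMap ℤ ℤ_[p])).disc) : mLocal p f = 1 := by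
  have := subsingleton_integralCosets (K := ℚ_[p]) h
  rw [mLocal, Nat.card_congr (quotLocalRelEquiv (f.map_algebraMap ℤ_[p] ℚ_[p])),
    Nat.card_eq_one_iff_unique]
  exact ⟨this, ⟨Quotient.mk _ ⟨1, one_mem_integralTwists _⟩⟩⟩

end QuotEquiv

section Count

theorem finite_pi_and_card_pi_eq_finprod {ι : Type*} {C : ι → Type*} [∀ i, Finite (C i)]
    (h : {i | Nat.card (C i) ≠ 1}.Finite) :
    Finite (∀ i, C i) ∧ Nat.card (∀ i, C i) = ∏ᶠ i, Nat.card (C i) := by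
  classical
  let S := h.toFinset
  have card_off (i : {i // i ∉ S}) : Nat.card (C i) = 1 := by
    simpa [S] using i.2
  have unique_off (i : {i // i ∉ S}) : Nonempty (Unique (C i)) :=
    unique_iff_subsingleton_and_nonempty _ |>.2 (Nat.card_eq_one_iff_unique.1 (card_off i))
  have (i : {i // i ∉ S}) : Unique (C i) := (unique_off i).some
  let e : (∀ i, C i) ≃ ∀ i : S, C i :=
    (Equiv.piEquivPiSubtypeProd (· ∈ S) C).trans (Equiv.prodUnique _ _)
  refine ⟨.of_equiv _ e.symm, ?_⟩
  rw [Nat.card_congr e, Nat.card_pi, finprod_eq_finsetProd_of_mulSupport_subset (s := S),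
    Finset.prod_coe_sort S fun i ↦ Nat.card (C i)]
  simp [S, Function.mulSupport]

end Count

/-- For every integral binary quartic form `f` with `Δ(f) ≠ 0`, all
the quantities `m(f)` and `m_p(f)` are finite, `m_p(f) = 1` for all but finitely many
primes `p`, and `m(f) = ∏_p m_p(f)`. -/
theorem m_euler_product (f : BQ ℤ) (hΔ : f.disc ≠ 0) :
    Finite (Quot (globalRel f)) ∧
    (∀ p : Nat.Primes, Finite (Quot (localRel (p : ℕ) f))) ∧
    {p : Nat.Primes | mLocal (p : ℕ) f ≠ 1}.Finite ∧
    mGlobal f = ∏ᶠ p : Nat.Primes, mLocal (p : ℕ) f := by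
  have local_finite (p : Nat.Primes) : Finite (Quot (localRel p f)) := finite_quot_localRel hΔ p
  have almost_all_one : {p : Nat.Primes | mLocal p f ≠ 1}.Finite :=
    (finite_not_isUnit_disc hΔ).subset fun p hp h ↦ hp (mLocal_eq_one_of_isUnit_disc h)
  let localization : Quot (globalRel f) ≃ ∀ p : Nat.Primes, Quot (localRel p f) :=
    (quotGlobalRelEquiv f).trans <| (Equiv.ofBijective _ (bijective_baseChange_int hΔ)).trans <|
      Equiv.piCongrRight fun p ↦ (quotLocalRelEquiv (f.map_algebraMap ℚ ℚ_[p])).symm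
  obtain ⟨finite_pi, card_pi⟩ := finite_pi_and_card_pi_eq_finprod almost_all_one
  exact ⟨.of_equiv _ localization.symm, local_finite, almost_all_one,
    (Nat.card_congr localization).trans card_pi⟩

end BQPaper
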